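/- Let κ > 0, h > 0, and let G : (0, ∞) → [0, 1] be nonincreasing. Define r(t) = e^{κt} G(e^t) for t ∈ ℝ and ř(x) = ∫_{−∞}^{x} e^{−(x−t)} r(t) dt, assumed finite for every x ∈ ℝ. Suppose that for every x ∈ ℝ the sequence ř(x + nh) converges as n → ∞ to a limit d(x) ∈ (0, ∞) (so that d is h-periodic). Then for all x, y ∈ ℝ with y < x + h: (a) ř(x+h) − e^{y−x−h} ř(y) = e^{−(x+h)} ∫_{e^y}^{e^{x+h}} u^κ G(u) du; (b) liminf_{n→∞} e^{(y+nh)κ} G(e^{y+nh}) ≥ e^{−(x+h−y)κ} (1 − e^{y−x−h})^{−1} [d(x) − e^{y−x−h} d(y)]; (c) limsup_{n→∞} e^{(x+nh)κ} G(e^{x+nh}) ≤ e^{(x+h−y)κ} (1 − e^{y−x−h})^{−1} [d(x) − e^{y−x−h} d(y)]. -/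

import Mathlib

open MeasureTheory Filter

/-!
Since `e^{y-X} ř(y)` is the part of the integral `ř(X)` over `t < y`, the combination
`(1 - e^{y-X})⁻¹ (ř(X) - e^{y-X} ř(y))` is a weighted mean of `r` over `[y, X]`. Monotonicity of `G`
lets `r` grow by a factor at most `e^{κ(X-y)}` on this window, so the mean is at most
`e^{κ(X-y)} r(y)` and at least `e^{-κ(X-y)} r(X)`. Translating the window by `nh` and letting
`n → ∞` turns these two inequalities into the bounds on the lower and upper limits.
-/

section

open Real Set Topology

/-- The smoothing `ř` of `r`, i.e. its convolution with the density of the standard exponential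
distribution. -/
noncomputable def expSmoothing (r : ℝ → ℝ) (x : ℝ) : ℝ :=
  ∫ t in Iio x, exp (-(x - t)) * r t

/-- The mean of `r` over `[y, x]` with respect to the weight `e^{-(x-t)} dt`, whose total mass there
is `1 - e^{y-x}`. -/
noncomputable def expMean (r : ℝ → ℝ) (y x : ℝ) : ℝ :=
  (1 - exp (y - x))⁻¹ * ∫ t in y..x, exp (-(x - t)) * r t

theorem integral_exp_neg_sub (y x : ℝ) : ∫ t in y..x, exp (-(x - t)) = 1 - exp (y - x) := by
  simp [intervalIntegral.integral_comp_sub_right (fun t => exp t) x]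

theorem integral_comp_exp_mul_exp (f : ℝ → ℝ) (a b : ℝ) :
    ∫ t in a..b, f (exp t) * exp t = ∫ u in exp a..exp b, f u :=
  intervalIntegral.integral_comp_mul_deriv_of_deriv_nonneg continuous_exp.continuousOn
    (fun t _ => hasDerivAt_exp t) (fun t _ => (exp_pos t).le)

theorem one_sub_exp_sub_pos {y x : ℝ} (hyx : y < x) : 0 < 1 - exp (y - x) :=
  sub_pos.2 (exp_lt_one_iff.2 (sub_neg.2 hyx))

variable {r : ℝ → ℝ} {x y κ M : ℝ}

theorem exp_mul_expSmoothing (r : ℝ → ℝ) (y x : ℝ) :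
    exp (y - x) * expSmoothing r y = ∫ t in Iio y, exp (-(x - t)) * r t := by
  rw [expSmoothing, ← integral_const_mul]
  congr with t
  rw [← mul_assoc, ← exp_add]
  ring_nf

theorem expSmoothing_sub_exp_mul_expSmoothing
    (hr : IntegrableOn (fun t => exp (-(x - t)) * r t) (Iio x)) (hyx : y ≤ x) :
    expSmoothing r x - exp (y - x) * expSmoothing r y = ∫ t in y..x, exp (-(x - t)) * r t := by
  rw [exp_mul_expSmoothing, expSmoothing]
  exact intervalIntegral.integral_Iio_sub_Iio' hr (hr.mono_set (Iio_subset_Iio hyx))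

theorem expMean_eq_expSmoothing
    (hr : IntegrableOn (fun t => exp (-(x - t)) * r t) (Iio x)) (hyx : y ≤ x) :
    expMean r y x =
      (1 - exp (y - x))⁻¹ * (expSmoothing r x - exp (y - x) * expSmoothing r y) := by
  rw [expMean, expSmoothing_sub_exp_mul_expSmoothing hr hyx]

theorem expMean_const (hyx : y < x) (c : ℝ) : expMean (fun _ => c) y x = c := by
  rw [expMean, intervalIntegral.integral_mul_const, integral_exp_neg_sub,
    inv_mul_cancel_left₀ (one_sub_exp_sub_pos hyx).ne']

theorem expMean_mono {f g : ℝ → ℝ}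
    (hf : IntervalIntegrable (fun t => exp (-(x - t)) * f t) volume y x)
    (hg : IntervalIntegrable (fun t => exp (-(x - t)) * g t) volume y x)
    (hyx : y < x) (hfg : ∀ t ∈ Icc y x, f t ≤ g t) : expMean f y x ≤ expMean g y x := by
  have hweighted : ∀ t ∈ Icc y x, exp (-(x - t)) * f t ≤ exp (-(x - t)) * g t :=
    fun t ht => mul_le_mul_of_nonneg_left (hfg t ht) (exp_pos _).le
  exact mul_le_mul_of_nonneg_left (intervalIntegral.integral_mono_on hyx.le hf hg hweighted)
    (inv_nonneg.2 (one_sub_exp_sub_pos hyx).le)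

theorem intervalIntegrable_exp_neg_sub_mul_const (c : ℝ) :
    IntervalIntegrable (fun t => exp (-(x - t)) * c) volume y x :=
  Continuous.intervalIntegrable (by fun_prop) _ _

theorem expMean_le (hr : IntervalIntegrable (fun t => exp (-(x - t)) * r t) volume y x)
    (hyx : y < x) (hM : ∀ t ∈ Icc y x, r t ≤ M) : expMean r y x ≤ M :=
  (expMean_mono hr (intervalIntegrable_exp_neg_sub_mul_const M) hyx hM).trans_eq
    (expMean_const hyx M)

theorem le_expMean (hr : IntervalIntegrable (fun t => exp (-(x - t)) * r t) volume y x)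
    (hyx : y < x) (hM : ∀ t ∈ Icc y x, M ≤ r t) : M ≤ expMean r y x :=
  (expMean_const hyx M).symm.trans_le
    (expMean_mono (intervalIntegrable_exp_neg_sub_mul_const M) hr hyx hM)

theorem intervalIntegrable_of_integrableOn_Iio {f : ℝ → ℝ} (hf : IntegrableOn f (Iio x))
    (hyx : y ≤ x) : IntervalIntegrable f volume y x :=
  (intervalIntegrable_iff_integrableOn_Ico_of_le hyx).2 (hf.mono_set Ico_subset_Iio_self)

/-- The growth condition `r t ≤ e^{κ(t-s)} r s` for `s ≤ t`, equivalently monotone decrease of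
`e^{-κt} r t`, together with nonnegativity of `r`. -/
structure HasExpGrowth (r : ℝ → ℝ) (κ : ℝ) : Prop where
  nonneg : ∀ t, 0 ≤ r t
  le_exp_mul : ∀ ⦃s t⦄, s ≤ t → r t ≤ exp (κ * (t - s)) * r s

namespace HasExpGrowth

theorem of_antitoneOn {G : ℝ → ℝ} (hG : AntitoneOn G (Ioi 0)) (hG0 : ∀ u, 0 < u → 0 ≤ G u)
    (κ : ℝ) : HasExpGrowth (fun t => exp (κ * t) * G (exp t)) κ where
  nonneg t := mul_nonneg (exp_pos _).le (hG0 _ (exp_pos t))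
  le_exp_mul s t hst :=
    calc exp (κ * t) * G (exp t)
      _ ≤ exp (κ * t) * G (exp s) := by
        gcongr
        exact hG (exp_pos s) (exp_pos t) (exp_le_exp.2 hst)
      _ = exp (κ * (t - s)) * (exp (κ * s) * G (exp s)) := by
        rw [← mul_assoc, ← exp_add]
        ring_nf

theorem le_exp_mul_of_le (hr : HasExpGrowth r κ) (hκ : 0 ≤ κ) {s t c : ℝ} (hst : s ≤ t)
    (hc : t - s ≤ c) : r t ≤ exp (κ * c) * r s :=
  (hr.le_exp_mul hst).trans (by gcongr; exact hr.nonneg s)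

theorem exp_neg_mul_expMean_le (hr : HasExpGrowth r κ) (hκ : 0 ≤ κ)
    (hint : IntervalIntegrable (fun t => exp (-(x - t)) * r t) volume y x) (hyx : y < x) :
    exp (-(κ * (x - y))) * expMean r y x ≤ r y := by
  have hmean : expMean r y x ≤ exp (κ * (x - y)) * r y :=
    expMean_le hint hyx fun t ht => hr.le_exp_mul_of_le hκ ht.1 (by linarith [ht.2])
  rwa [exp_neg, inv_mul_le_iff₀ (exp_pos _)]

theorem le_exp_mul_expMean (hr : HasExpGrowth r κ) (hκ : 0 ≤ κ)
    (hint : IntervalIntegrable (fun t => exp (-(x - t)) * r t) volume y x) (hyx : y < x) :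
    r x ≤ exp (κ * (x - y)) * expMean r y x := by
  have hmean : (exp (κ * (x - y)))⁻¹ * r x ≤ expMean r y x :=
    le_expMean hint hyx fun t ht => (inv_mul_le_iff₀ (exp_pos _)).2
      (hr.le_exp_mul_of_le hκ ht.2 (by linarith [ht.1]))
  rwa [inv_mul_le_iff₀ (exp_pos _)] at hmean

theorem expSmoothing_nonneg (hr : HasExpGrowth r κ) (x : ℝ) : 0 ≤ expSmoothing r x :=
  integral_nonneg fun t => mul_nonneg (exp_pos _).le (hr.nonneg t)

theorem le_mul_expSmoothing (hr : HasExpGrowth r κ) (hκ : 0 ≤ κ)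
    (hint : IntegrableOn (fun t => exp (-(x - t)) * r t) (Iio x)) :
    r x ≤ exp κ * (1 - exp (-1))⁻¹ * expSmoothing r x := by
  have hwindow : x - 1 < x := sub_one_lt x
  have hmean : expMean r (x - 1) x ≤ (1 - exp (-1))⁻¹ * expSmoothing r x := by
    rw [expMean_eq_expSmoothing hint hwindow.le, sub_sub_cancel_left]
    have hmass : 0 < 1 - exp (-1) := by simp
    gcongr
    exact sub_le_self _ (mul_nonneg (exp_pos _).le (hr.expSmoothing_nonneg _))
  calc r x
    _ ≤ exp (κ * (x - (x - 1))) * expMean r (x - 1) x :=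
      hr.le_exp_mul_expMean hκ (intervalIntegrable_of_integrableOn_Iio hint hwindow.le) hwindow
    _ = exp κ * expMean r (x - 1) x := by rw [sub_sub_cancel, mul_one]
    _ ≤ exp κ * (1 - exp (-1))⁻¹ * expSmoothing r x := by
      rw [mul_assoc]
      gcongr

end HasExpGrowth

variable {ι : Type*} {l : Filter ι} {s : ι → ℝ} {a b : ℝ}

theorem tendsto_expMean_add (hint : ∀ x, IntegrableOn (fun t => exp (-(x - t)) * r t) (Iio x))
    (hyx : y ≤ x) (hx : Tendsto (fun i => expSmoothing r (x + s i)) l (𝓝 a))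
    (hy : Tendsto (fun i => expSmoothing r (y + s i)) l (𝓝 b)) :
    Tendsto (fun i => expMean r (y + s i) (x + s i)) l
      (𝓝 ((1 - exp (y - x))⁻¹ * (a - exp (y - x) * b))) := by
  refine ((hx.sub (hy.const_mul (exp (y - x)))).const_mul (1 - exp (y - x))⁻¹).congr fun i => ?_
  rw [expMean_eq_expSmoothing (hint _) (by gcongr), add_sub_add_right_eq_sub]

namespace HasExpGrowth

variable [l.NeBot]

theorem le_liminf_add (hr : HasExpGrowth r κ) (hκ : 0 ≤ κ)
    (hint : ∀ x, IntegrableOn (fun t => exp (-(x - t)) * r t) (Iio x)) (hyx : y < x)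
    (hx : Tendsto (fun i => expSmoothing r (x + s i)) l (𝓝 a))
    (hy : Tendsto (fun i => expSmoothing r (y + s i)) l (𝓝 b)) :
    exp (-(κ * (x - y))) * (1 - exp (y - x))⁻¹ * (a - exp (y - x) * b) ≤
      l.liminf fun i => r (y + s i) := by
  have hlim := (tendsto_expMean_add hint hyx.le hx hy).const_mul (exp (-(κ * (x - y))))
  have hle (i : ι) : exp (-(κ * (x - y))) * expMean r (y + s i) (x + s i) ≤ r (y + s i) := by
    have hyx' : y + s i < x + s i := by gcongr
    simpa only [add_sub_add_right_eq_sub] using hr.exp_neg_mul_expMean_le hκ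
      (intervalIntegrable_of_integrableOn_Iio (hint _) hyx'.le) hyx'
  -- In `ℝ` the lower limit of a function tending to `+∞` is the junk value `0`.
  have hbdd : l.IsBoundedUnder (· ≤ ·) fun i => r (y + s i) :=
    (hy.const_mul _).isBoundedUnder_le.mono_le <|
      Eventually.of_forall fun i => hr.le_mul_expSmoothing hκ (hint (y + s i))
  rw [mul_assoc, ← hlim.liminf_eq]
  exact liminf_le_liminf (Eventually.of_forall hle) hlim.isBoundedUnder_ge hbdd.isCoboundedUnder_ge

theorem limsup_add_le (hr : HasExpGrowth r κ) (hκ : 0 ≤ κ)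
    (hint : ∀ x, IntegrableOn (fun t => exp (-(x - t)) * r t) (Iio x)) (hyx : y < x)
    (hx : Tendsto (fun i => expSmoothing r (x + s i)) l (𝓝 a))
    (hy : Tendsto (fun i => expSmoothing r (y + s i)) l (𝓝 b)) :
    l.limsup (fun i => r (x + s i)) ≤
      exp (κ * (x - y)) * (1 - exp (y - x))⁻¹ * (a - exp (y - x) * b) := by
  have hlim := (tendsto_expMean_add hint hyx.le hx hy).const_mul (exp (κ * (x - y)))
  have hle (i : ι) : r (x + s i) ≤ exp (κ * (x - y)) * expMean r (y + s i) (x + s i) := by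
    have hyx' : y + s i < x + s i := by gcongr
    simpa only [add_sub_add_right_eq_sub] using hr.le_exp_mul_expMean hκ
      (intervalIntegrable_of_integrableOn_Iio (hint _) hyx'.le) hyx'
  have hbdd : l.IsBoundedUnder (· ≥ ·) fun i => r (x + s i) :=
    isBoundedUnder_of ⟨0, fun i => hr.nonneg (x + s i)⟩
  rw [mul_assoc, ← hlim.limsup_eq]
  exact limsup_le_limsup (Eventually.of_forall hle) hbdd.isCoboundedUnder_le hlim.isBoundedUnder_le

end HasExpGrowth

theorem exp_neg_mul_integral_rpow_mul (κ : ℝ) (G : ℝ → ℝ) (y x : ℝ) :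
    exp (-x) * ∫ u in exp y..exp x, u ^ κ * G u =
      ∫ t in y..x, exp (-(x - t)) * (exp (κ * t) * G (exp t)) := by
  rw [← integral_comp_exp_mul_exp, ← intervalIntegral.integral_const_mul]
  congr with t
  rw [← exp_mul, mul_comm t κ, neg_sub, sub_eq_neg_add, exp_add]
  ring

theorem stmt_15_general {κ : ℝ} (hκ : 0 ≤ κ) (h : ℝ)
    {G : ℝ → ℝ} (hG : AntitoneOn G (Ioi 0)) (hG0 : ∀ u, 0 < u → 0 ≤ G u)
    {r : ℝ → ℝ} (hr : ∀ t, r t = exp (κ * t) * G (exp t))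
    {rc : ℝ → ℝ} (hrc : ∀ x, rc x = ∫ t in Iio x, exp (-(x - t)) * r t)
    (hint : ∀ x, IntegrableOn (fun t => exp (-(x - t)) * r t) (Iio x))
    {x y a b : ℝ} (hyx : y < x + h)
    (hx : Tendsto (fun n : ℕ => rc (x + n * h)) atTop (𝓝 a))
    (hy : Tendsto (fun n : ℕ => rc (y + n * h)) atTop (𝓝 b)) :
    (rc (x + h) - exp (y - x - h) * rc y =
      exp (-(x + h)) * ∫ u in exp y..exp (x + h), u ^ κ * G u) ∧
    (atTop.liminf (fun n : ℕ => exp ((y + n * h) * κ) * G (exp (y + n * h))) ≥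
      exp (-((x + h - y) * κ)) * (1 - exp (y - x - h))⁻¹ * (a - exp (y - x - h) * b)) ∧
    (atTop.limsup (fun n : ℕ => exp ((x + n * h) * κ) * G (exp (x + n * h))) ≤
      exp ((x + h - y) * κ) * (1 - exp (y - x - h))⁻¹ * (a - exp (y - x - h) * b)) := by
  obtain rfl : r = fun t => exp (κ * t) * G (exp t) := funext hr
  obtain rfl : rc = expSmoothing fun t => exp (κ * t) * G (exp t) := funext hrc
  have hgrowth := HasExpGrowth.of_antitoneOn hG hG0 κ
  have hshift (n : ℕ) : x + (n + 1 : ℕ) * h = x + h + n * h := by push_cast; ring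
  have hxh := (tendsto_add_atTop_iff_nat 1).2 hx
  simp only [hshift] at hxh
  simp only [sub_sub, mul_comm _ κ]
  refine ⟨?_, hgrowth.le_liminf_add hκ hint hyx hxh hy, ?_⟩
  · rw [exp_neg_mul_integral_rpow_mul, expSmoothing_sub_exp_mul_expSmoothing (hint _) hyx.le]
  · rw [← limsup_nat_add _ 1]
    simpa only [hshift] using hgrowth.limsup_add_le hκ hint hyx hxh hy

end

/-- Arithmetic-case renewal estimates. Let `κ, h > 0`, `G : (0,∞) → [0,1]` nonincreasing,
`r(t) = e^{κt} G(e^t)`, `ř(x) = ∫_{−∞}^x e^{−(x−t)} r(t) dt` (assumed finite), and suppose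
`ř(x + nh) → d(x) ∈ (0,∞)` as `n → ∞` for every `x`. Then for all `y < x + h`:
(a) `ř(x+h) − e^{y−x−h} ř(y) = e^{−(x+h)} ∫_{e^y}^{e^{x+h}} u^κ G(u) du`;
(b) `liminf_n e^{(y+nh)κ} G(e^{y+nh}) ≥ e^{−(x+h−y)κ} (1 − e^{y−x−h})⁻¹ (d(x) − e^{y−x−h} d(y))`;
(c) `limsup_n e^{(x+nh)κ} G(e^{x+nh}) ≤ e^{(x+h−y)κ} (1 − e^{y−x−h})⁻¹ (d(x) − e^{y−x−h} d(y))`. -/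
theorem stmt_15 (κ h : ℝ) (hκ : 0 < κ) (hh : 0 < h)
    (G : ℝ → ℝ) (hGmono : ∀ u v : ℝ, 0 < u → u ≤ v → G v ≤ G u)
    (hG01 : ∀ u : ℝ, 0 < u → G u ∈ Set.Icc (0 : ℝ) 1)
    (r : ℝ → ℝ) (hr : ∀ t, r t = Real.exp (κ * t) * G (Real.exp t))
    (rc : ℝ → ℝ)
    (hrc : ∀ x, rc x = ∫ t in Set.Iio x, Real.exp (-(x - t)) * r t)
    (hint : ∀ x, IntegrableOn (fun t => Real.exp (-(x - t)) * r t) (Set.Iio x))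
    (d : ℝ → ℝ) (hd : ∀ x, 0 < d x)
    (hconv : ∀ x, Tendsto (fun n : ℕ => rc (x + n * h)) atTop (nhds (d x))) :
    ∀ x y : ℝ, y < x + h →
      (rc (x + h) - Real.exp (y - x - h) * rc y =
        Real.exp (-(x + h)) * ∫ u in Real.exp y..Real.exp (x + h), u ^ κ * G u) ∧
      (atTop.liminf
          (fun n : ℕ => Real.exp ((y + n * h) * κ) * G (Real.exp (y + n * h))) ≥
        Real.exp (-((x + h - y) * κ)) * (1 - Real.exp (y - x - h))⁻¹ *
          (d x - Real.exp (y - x - h) * d y)) ∧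
      (atTop.limsup
          (fun n : ℕ => Real.exp ((x + n * h) * κ) * G (Real.exp (x + n * h))) ≤
        Real.exp ((x + h - y) * κ) * (1 - Real.exp (y - x - h))⁻¹ *
          (d x - Real.exp (y - x - h) * d y)) := by
  intro x y hyx
  exact stmt_15_general hκ.le h (fun u hu v _ huv => hGmono u v hu huv)
    (fun u hu => (hG01 u hu).1) hr hrc hint hyx (hconv x) (hconv y)
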